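/- arXiv:0812.0062 — 2 statements merged into one kernel-verified Lean document; each statement's English description precedes it below -/
import Mathlib

section
/- Let Γ be a finite rooted tree and ⤳ a binary relation on its vertex set V satisfying the P-Enriques-diagram conditions (P1), (P2), (P3) together with: (a) ind(r) ≥ ind(q) whenever r ⪰ q, and (b) whenever r ⤳ q, at most one child s ∈ r⁺ satisfies ¬(s ⤳ q). Then for an integer d ≥ 2 there exists a d-weighting α of Γ with ⤳_α = ⤳ if and only if d ≥ max(2, max_{q∈V}(ind(q) + s(q))). In particular, the minimum dimension of a toric constellation inducing the given P-Enriques diagram equals max(2, max_{q∈V}(ind(q) + s(q))). -/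
/-- A finite rooted tree: a distinguished root, a parent map fixing the root,
and a depth function witnessing that iterating the parent map reaches the root. -/
structure PTree (V : Type) where
  root : V
  parent : V → V
  depth : V → ℕ
  parent_root : parent root = root
  depth_root : depth root = 0
  depth_eq : ∀ v, v ≠ root → depth v = depth (parent v) + 1

namespace PTree

variable {V : Type}

/-- `r ⪰ q` : the descendancy order (`q` lies on the path from `r` to the root). -/
def desc (T : PTree V) (r q : V) : Prop := ∃ k : ℕ, T.parent^[k] r = q

/-- `r ≻ q`. -/
def sdesc (T : PTree V) (r q : V) : Prop := T.desc r q ∧ r ≠ q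

/-- `r ∈ q⁺` : `r` is a child of `q`. -/
def child (T : PTree V) (r q : V) : Prop := T.parent r = q ∧ r ≠ T.root

/-- `w` is a d-weighting of `T` : each non-root vertex gets a weight in `{1,…,d}`,
and distinct children of a common vertex get distinct weights. -/
def IsWeighting (T : PTree V) (d : ℕ) (w : V → ℕ) : Prop :=
  (∀ v, v ≠ T.root → 1 ≤ w v ∧ w v ≤ d) ∧
    ∀ r s, r ≠ T.root → s ≠ T.root → T.parent r = T.parent s → r ≠ s → w r ≠ w s

/-- The length of the path (code) from `q` up to a descendant `r`. -/
def codeLen (T : PTree V) (r q : V) : ℕ := T.depth r - T.depth q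

/-- The proximity relation induced by a weighting: `r ⤳_α q` iff `r ≻ q` and the first
entry of the code of `r` over `q` differs from all the later entries.  (The `j`-th entry
of the code, `1 ≤ j ≤ k`, is the weight of `parent^[k-j] r`, where `k` is the code length.) -/
def prox (T : PTree V) (w : V → ℕ) (r q : V) : Prop :=
  T.sdesc r q ∧ ∀ i, i + 2 ≤ T.codeLen r q →
    w (T.parent^[T.codeLen r q - 1] r) ≠ w (T.parent^[i] r)

end PTree

/-- The proximity index of `q` : the number of vertices `p` with `q ⤳ p`. -/
noncomputable def ind {V : Type} (rel : V → V → Prop) (q : V) : ℕ :=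
  Nat.card {p : V // rel q p}

/-- `s(q)` : the number of children of `q` whose proximity index exceeds that of `q`. -/
noncomputable def PTree.sInd {V : Type} (T : PTree V) (rel : V → V → Prop) (q : V) : ℕ :=
  Nat.card {r : V // T.child r q ∧ ind rel q < ind rel r}

/-- The P-Enriques-diagram conditions (P1), (P2), (P3) on a binary relation `rel`. -/
def PTree.Enriques {V : Type} (T : PTree V) (rel : V → V → Prop) : Prop :=
  (∀ q p, rel q p → T.sdesc q p) ∧
  (∀ q p, T.child q p → rel q p) ∧
  (∀ r p q, T.desc r p → T.sdesc p q → rel r q → rel p q)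

/-- Condition (a): the proximity index is non-decreasing along the descendancy order. -/
def PTree.CondA {V : Type} (T : PTree V) (rel : V → V → Prop) : Prop :=
  ∀ r q, T.desc r q → ind rel q ≤ ind rel r

/-- Condition (b): whenever `r ⤳ q`, at most one child `s` of `r` satisfies `¬ s ⤳ q`. -/
def PTree.CondB {V : Type} (T : PTree V) (rel : V → V → Prop) : Prop :=
  ∀ r q, rel r q → ∀ s s', T.child s r → T.child s' r → ¬ rel s q → ¬ rel s' q → s = s'

namespace PTree

variable {V : Type}

lemma aux_depth_parent (T : PTree V) (v : V) : T.depth (T.parent v) = T.depth v - 1 := by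
  by_cases h : v = T.root
  · subst h; rw [T.parent_root, T.depth_root]
  · rw [T.depth_eq v h]; rfl

lemma aux_depth_iter (T : PTree V) (k : ℕ) (v : V) :
    T.depth (T.parent^[k] v) = T.depth v - k := by
  induction k generalizing v with
  | zero => simp
  | succ k ih => rw [Function.iterate_succ_apply, ih, aux_depth_parent]; omega

lemma aux_iter_root (T : PTree V) (k : ℕ) : T.parent^[k] T.root = T.root :=
  Function.iterate_fixed T.parent_root k

lemma aux_depth_zero (T : PTree V) (v : V) (h : T.depth v = 0) : v = T.root := by
  by_contra hv
  have := T.depth_eq v hv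
  omega

lemma aux_desc (T : PTree V) {r q : V} (h : T.desc r q) :
    T.depth q ≤ T.depth r ∧ T.parent^[T.depth r - T.depth q] r = q := by
  obtain ⟨k, rfl⟩ := h
  rw [aux_depth_iter]
  refine ⟨by omega, ?_⟩
  by_cases hk : k ≤ T.depth r
  · congr 2; omega
  · rw [T.aux_depth_zero (T.parent^[k] r) (by rw [aux_depth_iter]; omega)]
    apply T.aux_depth_zero
    rw [aux_depth_iter]; omega

lemma aux_sdesc (T : PTree V) {r q : V} (h : T.sdesc r q) : T.depth q < T.depth r := by
  have := T.aux_desc h.1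
  rcases Nat.lt_or_ge (T.depth q) (T.depth r) with h1 | h1
  · exact h1
  · exfalso
    have h2 : T.depth r - T.depth q = 0 := by omega
    rw [h2] at this
    exact h.2 this.2

/-- The child of `q` on the path to `r`. -/
def auxTop (T : PTree V) (r q : V) : V := T.parent^[T.codeLen r q - 1] r

lemma aux_sdesc_step (T : PTree V) {r p : V} (hr : r ≠ T.root) :
    T.sdesc r p ↔ p = T.parent r ∨ T.sdesc (T.parent r) p := by
  have hd := T.depth_eq r hr
  constructor
  · intro h
    by_cases hp : p = T.parent r
    · exact Or.inl hp
    · right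
      obtain ⟨⟨k, hk⟩, hne⟩ := h
      cases k with
      | zero => exact absurd hk hne
      | succ k => exact ⟨⟨k, by simpa using hk⟩, fun h => hp h.symm⟩
  · rintro (h | h)
    · subst h
      refine ⟨⟨1, rfl⟩, fun h => ?_⟩
      rw [← h] at hd; omega
    · have := T.aux_sdesc h
      obtain ⟨⟨k, hk⟩, hne⟩ := h
      refine ⟨⟨k+1, by simpa using hk⟩, fun h => ?_⟩
      subst h; omega

lemma aux_not_sdesc_root (T : PTree V) (p : V) : ¬ T.sdesc T.root p := by
  rintro ⟨⟨k, hk⟩, hne⟩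
  rw [aux_iter_root] at hk
  exact hne hk

lemma aux_prox_step (T : PTree V) (w : V → ℕ) {r p : V} (hr : r ≠ T.root) :
    T.prox w r p ↔ p = T.parent r ∨
      (T.prox w (T.parent r) p ∧ w r ≠ w (T.auxTop (T.parent r) p)) := by
  have hd := T.depth_eq r hr
  unfold prox
  rw [T.aux_sdesc_step hr]
  by_cases hp : p = T.parent r
  · subst hp
    simp only [true_or, true_and, iff_true]
    intro i hi
    unfold codeLen at hi
    omega
  · simp only [hp, false_or]
    by_cases hs : T.sdesc (T.parent r) p
    · have hlt := T.aux_sdesc hs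
      simp only [hs, true_and]
      have hc : T.codeLen r p = T.codeLen (T.parent r) p + 1 := by unfold codeLen; omega
      have hpos : 1 ≤ T.codeLen (T.parent r) p := by unfold codeLen; omega
      have ht : T.parent^[T.codeLen r p - 1] r =
          T.parent^[T.codeLen (T.parent r) p - 1] (T.parent r) := by
        rw [← Function.iterate_succ_apply]; congr 2; omega
      rw [ht, hc]
      constructor
      · intro h
        refine ⟨fun i hi => ?_, ?_⟩
        · have := h (i+1) (by omega)
          simpa using this
        · have := h 0 (by omega)
          exact fun h' => this h'.symm
      · rintro ⟨h1, h2⟩ i hi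
        cases i with
        | zero => exact fun h' => h2 h'.symm
        | succ i =>
          have := h1 i (by omega)
          simpa using this
    · simp [hs]

lemma aux_top_inj (T : PTree V) (w : V → ℕ) {q p₁ p₂ : V} (h₁ : T.prox w q p₁)
    (h₂ : T.prox w q p₂) (h : w (T.auxTop q p₁) = w (T.auxTop q p₂)) : p₁ = p₂ := by
  have a1 := T.aux_desc h₁.1.1
  have a2 := T.aux_desc h₂.1.1
  have b1 := T.aux_sdesc h₁.1
  have b2 := T.aux_sdesc h₂.1
  rcases lt_trichotomy (T.depth p₁) (T.depth p₂) with hlt | heq | hlt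
  · exact absurd h (h₁.2 _ (by unfold codeLen; omega))
  · rw [← a1.2, ← a2.2, heq]
  · exact absurd h.symm (h₂.2 _ (by unfold codeLen; omega))

lemma aux_top_ne_root (T : PTree V) {q p : V} (h : T.sdesc q p) :
    T.auxTop q p ≠ T.root ∧ T.depth (T.auxTop q p) ≤ T.depth q := by
  have b1 := T.aux_sdesc h
  have : T.depth (T.auxTop q p) = T.depth p + 1 := by
    unfold auxTop codeLen
    rw [aux_depth_iter]; omega
  refine ⟨fun h' => ?_, by omega⟩
  rw [h', T.depth_root] at this
  omega

lemma aux_prox_congr (T : PTree V) {w w' : V → ℕ} {r p : V}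
    (h : ∀ v, T.depth v ≤ T.depth r → w v = w' v) : T.prox w r p ↔ T.prox w' r p := by
  unfold prox
  have : ∀ i, w (T.parent^[i] r) = w' (T.parent^[i] r) := fun i =>
    h _ (by rw [aux_depth_iter]; omega)
  simp only [this]

lemma aux_rel_parent (T : PTree V) {rel : V → V → Prop} (hE : T.Enriques rel) {r p : V}
    (hr : r ≠ T.root) (h : rel r p) : p = T.parent r ∨ rel (T.parent r) p := by
  rcases (T.aux_sdesc_step hr).1 (hE.1 _ _ h) with h1 | h1
  · exact Or.inl h1
  · exact Or.inr (hE.2.2 r _ p ⟨1, rfl⟩ h1 h)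

open Classical in
lemma aux_ind [Fintype V] (rel : V → V → Prop) (q : V) :
    ind rel q = (Finset.univ.filter (fun p => rel q p)).card := by
  unfold ind
  rw [Nat.card_eq_fintype_card, Fintype.card_subtype]

open Classical in
lemma aux_sInd [Fintype V] (T : PTree V) (rel : V → V → Prop) (q : V) :
    T.sInd rel q =
      (Finset.univ.filter (fun r => T.child r q ∧ ind rel q < ind rel r)).card := by
  unfold sInd
  rw [Nat.card_eq_fintype_card, Fintype.card_subtype]

lemma aux_not_rel_self (T : PTree V) {rel : V → V → Prop} (hE : T.Enriques rel) (q : V) :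
    ¬ rel q q := fun h => (hE.1 _ _ h).2 rfl

/-- A child of larger index is proximate to everything its parent is proximate to. -/
lemma aux_big [Fintype V] (T : PTree V) {rel : V → V → Prop} (hE : T.Enriques rel)
    {r q p : V} (hc : T.child r q) (hi : ind rel q < ind rel r) (hp : rel q p) : rel r p := by
  classical
  by_contra hn
  rw [aux_ind, aux_ind] at hi
  have hsub : (Finset.univ.filter (fun x => rel r x)) ⊆
      insert q ((Finset.univ.filter (fun x => rel q x)).erase p) := by
    intro x hx
    simp only [Finset.mem_filter, Finset.mem_univ, true_and, Finset.mem_insert,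
      Finset.mem_erase] at hx ⊢
    rcases T.aux_rel_parent hE hc.2 hx with h | h
    · left; rw [h, hc.1]
    · right; rw [hc.1] at h
      exact ⟨fun e => hn (e ▸ hx), h⟩
  have h1 := Finset.card_le_card hsub
  have h2 := Finset.card_insert_le q ((Finset.univ.filter (fun x => rel q x)).erase p)
  have h3 := Finset.card_erase_add_one (s := Finset.univ.filter (fun x => rel q x)) (a := p)
    (by simpa using hp)
  omega

/-- A child of non-larger index misses a unique vertex. -/
lemma aux_small [Fintype V] (T : PTree V) {rel : V → V → Prop} (hE : T.Enriques rel)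
    (hA : T.CondA rel) {r q : V} (hc : T.child r q) (hi : ¬ ind rel q < ind rel r) :
    ∃ p, rel q p ∧ ∀ x, rel q x → (rel r x ↔ x ≠ p) := by
  classical
  have hge := hA r q ⟨1, hc.1⟩
  rw [aux_ind, aux_ind] at hi hge
  have hqr : rel r q := hE.2.1 _ _ hc
  obtain ⟨p, hp, hn⟩ : ∃ p, rel q p ∧ ¬ rel r p := by
    by_contra hcon
    push Not at hcon
    have hsub : insert q (Finset.univ.filter (fun x => rel q x)) ⊆
        (Finset.univ.filter (fun x => rel r x)) := by
      intro x hx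
      simp only [Finset.mem_filter, Finset.mem_univ, true_and, Finset.mem_insert] at hx ⊢
      rcases hx with rfl | hx
      · exact hqr
      · exact hcon x hx
    have h1 := Finset.card_le_card hsub
    rw [Finset.card_insert_of_notMem (by simpa using T.aux_not_rel_self hE q)] at h1
    omega
  refine ⟨p, hp, fun x hx => ⟨fun h e => hn (e ▸ h), fun hne => ?_⟩⟩
  by_contra hnx
  have hsub : (Finset.univ.filter (fun x => rel r x)) ⊆
      insert q (((Finset.univ.filter (fun x => rel q x)).erase p).erase x) := by
    intro y hy
    simp only [Finset.mem_filter, Finset.mem_univ, true_and, Finset.mem_insert,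
      Finset.mem_erase] at hy ⊢
    rcases T.aux_rel_parent hE hc.2 hy with h | h
    · left; rw [h, hc.1]
    · right; rw [hc.1] at h
      exact ⟨fun e => hnx (e ▸ hy), fun e => hn (e ▸ hy), h⟩
  have h1 := Finset.card_le_card hsub
  have h2 := Finset.card_insert_le q
    (((Finset.univ.filter (fun x => rel q x)).erase p).erase x)
  have h3 := Finset.card_erase_add_one (s := Finset.univ.filter (fun x => rel q x)) (a := p)
    (by simpa using hp)
  have h4 := Finset.card_erase_add_one
    (s := (Finset.univ.filter (fun x => rel q x)).erase p) (a := x)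
    (by simp [hne, hx])
  omega

/-- The local choice of weights for the children of `q`. -/
lemma aux_choice [Fintype V] (T : PTree V) {rel : V → V → Prop} (hE : T.Enriques rel)
    (hA : T.CondA rel) (hB : T.CondB rel) (d : ℕ) (q : V)
    (hq : ind rel q + T.sInd rel q ≤ d) (c : V → ℕ)
    (hc : ∀ p, rel q p → 1 ≤ c p ∧ c p ≤ d)
    (hinj : ∀ p p', rel q p → rel q p' → c p = c p' → p = p') :
    ∃ g : V → ℕ, (∀ r, T.child r q → 1 ≤ g r ∧ g r ≤ d) ∧
      (∀ r s, T.child r q → T.child s q → g r = g s → r = s) ∧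
      (∀ r p, T.child r q → rel q p → (rel r p ↔ g r ≠ c p)) := by
  classical
  set S := Finset.univ.filter (fun r => T.child r q ∧ ind rel q < ind rel r) with hS
  set C := (Finset.univ.filter (fun p => rel q p)).image c with hC
  have hCc : C.card = ind rel q := by
    rw [aux_ind, hC, Finset.card_image_of_injOn]
    intro x hx y hy h
    exact hinj x y (by simpa using hx) (by simpa using hy) h
  have hCs : C ⊆ Finset.Icc 1 d := by
    intro x hx
    simp only [hC, Finset.mem_image, Finset.mem_filter, Finset.mem_univ, true_and] at hx
    obtain ⟨p, hp, rfl⟩ := hx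
    simpa using hc p hp
  have hcard : S.card ≤ (Finset.Icc 1 d \ C).card := by
    rw [Finset.card_sdiff_of_subset hCs, hCc, Nat.card_Icc, hS, ← aux_sInd]
    omega
  obtain ⟨e⟩ := Function.Embedding.nonempty_of_card_le (α := S) (β := (Finset.Icc 1 d \ C : Finset ℕ))
    (by simpa using hcard)
  have hsm := fun r (h : T.child r q) (hi : ¬ ind rel q < ind rel r) =>
    T.aux_small hE hA h hi
  choose! m hm1 hm2 using hsm
  let g : V → ℕ := fun r => if h : r ∈ S then (e ⟨r, h⟩ : ℕ) else c (m r)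
  have gS : ∀ r, r ∈ S → g r ∈ Finset.Icc 1 d \ C := by
    intro r h
    simp only [g, h, dif_pos]
    exact (e ⟨r, h⟩).2
  have gN : ∀ r, r ∉ S → g r = c (m r) := by
    intro r h
    simp only [g, h, dif_neg, not_false_eq_true]
  have memC : ∀ p, rel q p → c p ∈ C := by
    intro p hp
    exact Finset.mem_image_of_mem _ (by simpa using hp)
  have hNS : ∀ r, T.child r q → r ∉ S → ¬ ind rel q < ind rel r := by
    intro r h1 h2 h3
    exact h2 (by simp [hS, h1, h3])
  refine ⟨g, ?_, ?_, ?_⟩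
  · intro r hr
    by_cases h : r ∈ S
    · have := gS r h
      simp only [Finset.mem_sdiff, Finset.mem_Icc] at this
      exact this.1
    · rw [gN r h]
      exact hc _ (hm1 r hr (hNS r hr h))
  · intro r s hr hs hg
    by_cases h : r ∈ S <;> by_cases h' : s ∈ S
    · simp only [g, h, h', dif_pos] at hg
      have := e.injective (Subtype.ext hg)
      simpa using this
    · exfalso
      have h1 := gS r h
      rw [hg, gN s h'] at h1
      exact (Finset.mem_sdiff.1 h1).2 (memC _ (hm1 s hs (hNS s hs h')))
    · exfalso
      have h1 := gS s h'
      rw [← hg, gN r h] at h1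
      exact (Finset.mem_sdiff.1 h1).2 (memC _ (hm1 r hr (hNS r hr h)))
    · rw [gN r h, gN s h'] at hg
      have r1 := hm1 r hr (hNS r hr h)
      have s1 := hm1 s hs (hNS s hs h')
      have e1 := hinj _ _ r1 s1 hg
      refine hB q (m r) r1 r s hr hs ?_ ?_
      · rw [hm2 r hr (hNS r hr h) _ r1]; simp
      · rw [hm2 s hs (hNS s hs h') _ r1, e1]; simp
  · intro r p hr hp
    by_cases h : r ∈ S
    · have h2 : T.child r q ∧ ind rel q < ind rel r := by simpa [hS] using h
      have h1 : rel r p := T.aux_big hE hr h2.2 hp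
      refine ⟨fun _ he => ?_, fun _ => h1⟩
      have h3 := gS r h
      rw [he] at h3
      exact (Finset.mem_sdiff.1 h3).2 (memC _ hp)
    · rw [hm2 r hr (hNS r hr h) p hp, gN r h]
      have r1 := hm1 r hr (hNS r hr h)
      exact ⟨fun hne he => hne (hinj _ _ r1 hp he).symm, fun hne he => hne (by rw [he])⟩

lemma aux_build [Fintype V] (T : PTree V) {rel : V → V → Prop} (hE : T.Enriques rel)
    (hA : T.CondA rel) (hB : T.CondB rel) (d : ℕ)
    (hq : ∀ q, ind rel q + T.sInd rel q ≤ d) (n : ℕ) :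
    ∃ w : V → ℕ, (∀ v, v ≠ T.root → T.depth v ≤ n → 1 ≤ w v ∧ w v ≤ d) ∧
      (∀ r s, r ≠ T.root → s ≠ T.root → T.depth r ≤ n → T.parent r = T.parent s →
        r ≠ s → w r ≠ w s) ∧
      (∀ r p, T.depth r ≤ n → (T.prox w r p ↔ rel r p)) := by
  classical
  induction n with
  | zero =>
    refine ⟨fun _ => 0, ?_, ?_, ?_⟩
    · intro v hv h
      exact absurd (T.aux_depth_zero v (by omega)) hv
    · intro v _ hv _ h
      exact absurd (T.aux_depth_zero v (by omega)) hv
    · intro r p h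
      rw [T.aux_depth_zero r (by omega)]
      exact ⟨fun h => absurd h.1 (T.aux_not_sdesc_root p),
        fun h => absurd (hE.1 _ _ h) (T.aux_not_sdesc_root p)⟩
  | succ n ih =>
    obtain ⟨w, hw1, hw2, hw3⟩ := ih
    have key : ∀ q, T.depth q = n → ∃ g : V → ℕ, (∀ r, T.child r q → 1 ≤ g r ∧ g r ≤ d) ∧
      (∀ r s, T.child r q → T.child s q → g r = g s → r = s) ∧
      (∀ r p, T.child r q → rel q p → (rel r p ↔ g r ≠ w (T.auxTop q p))) := by
      intro q hqn
      apply T.aux_choice hE hA hB d q (hq q)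
      · intro p hp
        have := T.aux_top_ne_root (hE.1 _ _ hp)
        exact hw1 _ this.1 (by omega)
      · intro p p' hp hp' h
        exact T.aux_top_inj w ((hw3 q p (by omega)).2 hp) ((hw3 q p' (by omega)).2 hp') h
    choose! g hg1 hg2 hg3 using key
    let w' : V → ℕ := fun v => if T.depth v ≤ n then w v else g (T.parent v) v
    have w'1 : ∀ v, T.depth v ≤ n → w' v = w v := fun v h => by simp [w', h]
    have w'2 : ∀ v, ¬ T.depth v ≤ n → w' v = g (T.parent v) v := fun v h => by simp [w', h]
    refine ⟨w', ?_, ?_, ?_⟩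
    · intro v hv h
      have hd := T.depth_eq v hv
      by_cases hn : T.depth v ≤ n
      · rw [w'1 v hn]; exact hw1 v hv hn
      · rw [w'2 v hn]; exact hg1 _ (by omega) v ⟨rfl, hv⟩
    · intro r s hr hs h hp hne
      have hd := T.depth_eq r hr
      have hd' := T.depth_eq s hs
      rw [← hp] at hd'
      by_cases hn : T.depth r ≤ n
      · rw [w'1 r hn, w'1 s (by omega)]; exact hw2 r s hr hs hn hp hne
      · rw [w'2 r hn, w'2 s (by omega), ← hp]
        exact fun he => hne (hg2 _ (by omega) r s ⟨rfl, hr⟩ ⟨hp.symm, hs⟩ he)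
    · intro r p h
      by_cases hn : T.depth r ≤ n
      · rw [← hw3 r p hn]
        exact T.aux_prox_congr fun v hv => w'1 v (by omega)
      · have hr : r ≠ T.root := by
          rintro rfl
          rw [T.depth_root] at hn; omega
        have hd := T.depth_eq r hr
        have hch : T.child r (T.parent r) := ⟨rfl, hr⟩
        rw [T.aux_prox_step w' hr, w'2 r hn,
          T.aux_prox_congr (w := w') (w' := w) fun v hv => w'1 v (by omega),
          hw3 _ p (by omega)]
        constructor
        · rintro (rfl | ⟨h1, h2⟩)
          · exact hE.2.1 _ _ hch
          · rw [w'1 _ (by have := T.aux_top_ne_root (hE.1 _ _ h1); omega)] at h2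
            exact (hg3 _ (by omega) r p hch h1).2 h2
        · intro h1
          rcases T.aux_rel_parent hE hr h1 with h2 | h2
          · exact Or.inl h2
          · refine Or.inr ⟨h2, ?_⟩
            rw [w'1 _ (by have := T.aux_top_ne_root (hE.1 _ _ h2); omega)]
            exact (hg3 _ (by omega) r p hch h2).1 h1

lemma aux_necessary [Fintype V] (T : PTree V) {rel : V → V → Prop} (hE : T.Enriques rel)
    (d : ℕ) (w : V → ℕ) (hw : T.IsWeighting d w) (hr : ∀ r q, T.prox w r q ↔ rel r q) (q : V) :
    ind rel q + T.sInd rel q ≤ d := by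
  classical
  rw [aux_sInd, aux_ind]
  set S := Finset.univ.filter
    (fun r => T.child r q ∧ (Finset.univ.filter (fun p => rel q p)).card < ind rel r) with hS
  have hS' : ∀ r ∈ S, T.child r q ∧ ind rel q < ind rel r := by
    intro r h
    rw [aux_ind rel q]
    simpa [hS] using h
  set P := Finset.univ.filter (fun p => rel q p) with hP
  have hP' : ∀ p ∈ P, rel q p := by
    intro p h
    simpa [hP] using h
  have c1 : (P.image (fun p => w (T.auxTop q p))).card = P.card := by
    apply Finset.card_image_of_injOn
    intro x hx y hy h
    exact T.aux_top_inj w ((hr _ _).2 (hP' x hx)) ((hr _ _).2 (hP' y hy)) h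
  have c2 : (S.image w).card = S.card := by
    apply Finset.card_image_of_injOn
    intro x hx y hy h
    by_contra hne
    have h1 := (hS' x hx).1
    have h2 := (hS' y hy).1
    exact hw.2 x y h1.2 h2.2 (h1.1.trans h2.1.symm) hne h
  have hdis : Disjoint (P.image (fun p => w (T.auxTop q p))) (S.image w) := by
    rw [Finset.disjoint_left]
    intro x hx hx'
    obtain ⟨p, hp, rfl⟩ := Finset.mem_image.1 hx
    obtain ⟨r, hrS, he⟩ := Finset.mem_image.1 hx'
    obtain ⟨h1, h2⟩ := hS' r hrS
    have h3 := T.aux_big hE h1 h2 (hP' p hp)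
    rw [← hr, T.aux_prox_step w h1.2, h1.1] at h3
    rcases h3 with h3 | h3
    · exact T.aux_not_rel_self hE q (h3 ▸ hP' p hp)
    · exact h3.2 he
  rw [← c1, ← c2, ← Finset.card_union_of_disjoint hdis]
  have : P.image (fun p => w (T.auxTop q p)) ∪ S.image w ⊆ Finset.Icc 1 d := by
    intro x hx
    rw [Finset.mem_Icc]
    rcases Finset.mem_union.1 hx with hx | hx
    · obtain ⟨p, hp, rfl⟩ := Finset.mem_image.1 hx
      exact hw.1 _ (T.aux_top_ne_root (hE.1 _ _ (hP' p hp))).1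
    · obtain ⟨r, hrS, rfl⟩ := Finset.mem_image.1 hx
      exact hw.1 _ (hS' r hrS).1.2
  simpa using Finset.card_le_card this

end PTree

/-- Under the P-Enriques-diagram conditions together with conditions (a)
and (b), for an integer `d ≥ 2` there exists a `d`-weighting `α` with `⤳_α = ⤳` if and
only if `d ≥ max (2, max_q (ind q + s q))`.  In particular, the minimum dimension of a
toric constellation inducing the given P-Enriques diagram is `max (2, max_q (ind q + s q))`. -/
theorem toric_PEnriques_min_dimension {V : Type} [Fintype V] (T : PTree V)
    (rel : V → V → Prop) (hE : T.Enriques rel) (hA : T.CondA rel) (hB : T.CondB rel)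
    (d : ℕ) (hd : 2 ≤ d) :
    (∃ w : V → ℕ, T.IsWeighting d w ∧ ∀ r q, T.prox w r q ↔ rel r q) ↔
      max 2 (Finset.univ.sup fun q : V => ind rel q + T.sInd rel q) ≤ d := by
  constructor
  · rintro ⟨w, hw, hr⟩
    exact max_le hd (Finset.sup_le fun q _ => T.aux_necessary hE d w hw hr q)
  · intro h
    have hq : ∀ q, ind rel q + T.sInd rel q ≤ d := fun q =>
      (Finset.le_sup (f := fun q : V => ind rel q + T.sInd rel q) (Finset.mem_univ q)).trans
        ((le_max_right _ _).trans h)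
    obtain ⟨w, h1, h2, h3⟩ := T.aux_build hE hA hB d hq (Finset.univ.sup T.depth)
    have hn : ∀ v, T.depth v ≤ Finset.univ.sup T.depth := fun v =>
      Finset.le_sup (Finset.mem_univ v)
    exact ⟨w, ⟨fun v hv => h1 v hv (hn v), fun r s hr hs hp hne =>
      h2 r s hr hs (hn r) hp hne⟩, fun r q => h3 r q (hn r)⟩
end

section
/- For every integer d ≥ 2, every d-weighting α of a finite rooted tree Γ, and all vertices r, q with r ⪰ q, one has ind_α(r) ≥ ind_α(q), where ind_α(q) := #{p ∈ V : q ⤳_α p}. (Necessity of condition (a) — the proximity index is non-decreasing — in the characterization of toric P-Enriques diagrams.) -/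
theorem PTree.depth_parent' {V : Type} (T : PTree V) (v : V) :
    T.depth (T.parent v) = T.depth v - 1 := by
  by_cases h : v = T.root
  · subst h
    rw [T.parent_root, T.depth_root]
  · have := T.depth_eq v h
    omega

theorem PTree.depth_iter {V : Type} (T : PTree V) (k : ℕ) (v : V) :
    T.depth (T.parent^[k] v) = T.depth v - k := by
  induction k with
  | zero => simp
  | succ k ih =>
    rw [Function.iterate_succ_apply', T.depth_parent', ih]
    omega

theorem PTree.eq_root {V : Type} (T : PTree V) (v : V) (h : T.depth v = 0) : v = T.root := by
  by_contra hv
  have := T.depth_eq v hv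
  omega

theorem PTree.iter_codeLen {V : Type} (T : PTree V) (q p : V) (h : T.desc q p) :
    T.parent^[T.codeLen q p] q = p := by
  obtain ⟨k, rfl⟩ := h
  unfold PTree.codeLen
  rw [T.depth_iter]
  by_cases hk : k ≤ T.depth q
  · congr 2
    omega
  · rw [T.eq_root (T.parent^[k] q) (by rw [T.depth_iter]; omega)]
    apply T.eq_root
    rw [T.depth_iter]
    omega

/-- The weights on the path from the root to `q`. -/
def PTree.wset {V : Type} (T : PTree V) (w : V → ℕ) (q : V) : Finset ℕ :=
  (Finset.range (T.depth q)).image (fun i => w (T.parent^[i] q))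

theorem PTree.codeLen_pos {V : Type} (T : PTree V) (q p : V) (h : T.sdesc q p) :
    1 ≤ T.codeLen q p := by
  by_contra hc
  have h0 : T.codeLen q p = 0 := by omega
  have h1 := T.iter_codeLen q p h.1
  rw [h0] at h1
  exact h.2 h1

theorem PTree.prox_ind_eq {V : Type} (T : PTree V) (w : V → ℕ) (q : V) :
    ind (T.prox w) q = (T.wset w q).card := by
  have hm : ∀ p : {p : V // T.prox w q p},
      w (T.parent^[T.codeLen q p.1 - 1] q) ∈ T.wset w q := by
    rintro ⟨p, hp⟩
    have h1 := T.codeLen_pos q p hp.1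
    refine Finset.mem_image.2 ⟨_, Finset.mem_range.2 ?_, rfl⟩
    have h2 : T.codeLen q p ≤ T.depth q := Nat.sub_le _ _
    show T.codeLen q p - 1 < _
    omega
  let f : {p : V // T.prox w q p} → {x // x ∈ T.wset w q} := fun p => ⟨_, hm p⟩
  have hf : Function.Bijective f := by
    constructor
    · rintro ⟨p, hp⟩ ⟨p', hp'⟩ h
      have h' : w (T.parent^[T.codeLen q p - 1] q) = w (T.parent^[T.codeLen q p' - 1] q) :=
        congrArg Subtype.val h
      have h1 := T.codeLen_pos q p hp.1
      have h2 := T.codeLen_pos q p' hp'.1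
      have : T.codeLen q p = T.codeLen q p' := by
        rcases lt_trichotomy (T.codeLen q p) (T.codeLen q p') with hlt | he | hlt
        · exact absurd h'.symm (hp'.2 (T.codeLen q p - 1) (by omega))
        · exact he
        · exact absurd h' (hp.2 (T.codeLen q p' - 1) (by omega))
      apply Subtype.ext
      show p = p'
      rw [← T.iter_codeLen q p hp.1.1, ← T.iter_codeLen q p' hp'.1.1, this]
    · rintro ⟨x, hx⟩
      have hx' : ∃ m, m < T.depth q ∧ w (T.parent^[m] q) = x := by
        obtain ⟨m, hm, h⟩ := Finset.mem_image.1 hx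
        exact ⟨m, Finset.mem_range.1 hm, h⟩
      classical
      obtain ⟨m, ⟨hm1, hm2⟩, hmin⟩ : ∃ m, (m < T.depth q ∧ w (T.parent^[m] q) = x) ∧
          ∀ i < m, ¬ (i < T.depth q ∧ w (T.parent^[i] q) = x) :=
        ⟨Nat.find hx', Nat.find_spec hx', fun i hi => Nat.find_min hx' hi⟩
      have hc : T.codeLen q (T.parent^[m+1] q) = m + 1 := by
        unfold PTree.codeLen
        rw [T.depth_iter]
        omega
      refine ⟨⟨T.parent^[m+1] q, ⟨⟨⟨m+1, rfl⟩, ?_⟩, ?_⟩⟩, ?_⟩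
      · intro he
        have := congrArg T.depth he
        rw [T.depth_iter] at this
        omega
      · rw [hc]
        intro i hi he
        exact hmin i (by omega) ⟨by omega, by rw [← he]; exact hm2⟩
      · apply Subtype.ext
        show w (T.parent^[T.codeLen q (T.parent^[m+1] q) - 1] q) = x
        rw [hc]
        exact hm2
  unfold ind
  rw [Nat.card_congr (Equiv.ofBijective f hf)]
  simp

/-- For every `d ≥ 2`, every `d`-weighting `α` of a finite rooted tree,
and all vertices `r ⪰ q`, one has `ind_α r ≥ ind_α q` : the proximity index of the induced
proximity relation is non-decreasing. -/
theorem prox_ind_monotone {V : Type} [Fintype V] (T : PTree V)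
    (d : ℕ) (hd : 2 ≤ d) (w : V → ℕ) (hw : T.IsWeighting d w)
    (r q : V) (hrq : T.desc r q) :
    ind (T.prox w) q ≤ ind (T.prox w) r := by
  rw [T.prox_ind_eq, T.prox_ind_eq]
  apply Finset.card_le_card
  obtain ⟨k, rfl⟩ := hrq
  intro x hx
  obtain ⟨i, hi, h⟩ := Finset.mem_image.1 hx
  rw [Finset.mem_range, T.depth_iter] at hi
  refine Finset.mem_image.2 ⟨i + k, Finset.mem_range.2 (by omega), ?_⟩
  rw [← h]
  show w (T.parent^[i + k] r) = _
  rw [Function.iterate_add_apply]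
end
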